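/- There are no integers x ≥ 9 and y ≥ 0 with 10^x - y² = 31. -/

import Mathlib

/-!
Every power of 10 is congruent to 1 modulo 9, so `10 ^ x - y ^ 2 = 31` would give
`y ^ 2 ≡ 1 - 31 ≡ 6` modulo 9. Then the prime 3 divides `y ^ 2` but its square does not, which is
impossible.
-/

theorem pow_sub_pow_ne_of_prime {R : Type*} [CommRing R] {p b c : R} {n : ℕ} (hp : Prime p)
    (hb : p ^ n ∣ b - 1) (hc : p ∣ c - 1) (hcn : ¬p ^ n ∣ c - 1) (x : ℕ) (y : R) :
    b ^ x - y ^ n ≠ c := by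
  intro h
  have hn : n ≠ 0 := by
    rintro rfl
    exact hcn (by simp)
  have hbx : p ^ n ∣ b ^ x - 1 := hb.trans (sub_one_dvd_pow_sub_one b x)
  have hy : y ^ n = (b ^ x - 1) - (c - 1) := by linear_combination -h
  have hpyn : p ∣ y ^ n := hy ▸ dvd_sub ((dvd_pow_self p hn).trans hbx) hc
  have hpy : p ∣ y := hp.dvd_of_dvd_pow hpyn
  have hsub : p ^ n ∣ (b ^ x - 1) - (c - 1) := hy ▸ pow_dvd_pow_of_dvd hpy n
  exact hcn ((dvd_sub_right hbx).mp hsub)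

theorem no_solution_c31_general (x : ℕ) (y : ℤ) : (10 : ℤ) ^ x - y ^ 2 ≠ 31 :=
  pow_sub_pow_ne_of_prime Int.prime_three (by norm_num) (by norm_num) (by norm_num) x y

theorem no_solution_c31 :
    ∀ x : ℕ, 9 ≤ x → ∀ y : ℤ, 0 ≤ y → (10 : ℤ)^x - y^2 ≠ 31 :=
  fun x _ y _ => no_solution_c31_general x y
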